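/- Let δ ∈ D_0 with Σ_δ = {0,1}. Define c_δ(x) = b(max(x)) · ∏_{i : x_i ≠ max(x)} a(x_i) for x ∈ [0,1]^d, with a, b as in the construction. Then c_δ is the density of a d-dimensional copula: c_δ ≥ 0, and for each coordinate i and each r ∈ [0,1], ∫_{[0,1]^d} c_δ(u) 1{u_i ≤ r} du = r. -/

import Mathlib

open MeasureTheory Set
open scoped Classical

open Filter Topology ENNReal

lemma ftc_ac {u v : ℝ} (huv : u ≤ v) {G g : ℝ → ℝ} (hac : AbsolutelyContinuousOnInterval G u v)
    (hg : ∀ᵐ t, t ∈ Ioo u v → HasDerivAt G (g t) t ∧ 0 ≤ g t) :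
    ∫⁻ t in Ioc u v, ENNReal.ofReal (g t) = ENNReal.ofReal (G v - G u) := by
  have h1 := hac.intervalIntegrable_deriv
  have h2 := hac.integral_deriv_eq_sub
  have hne : ∀ᵐ t : ℝ, t ≠ v := by simp [ae_iff, measure_singleton]
  have hEq : deriv G =ᵐ[volume.restrict (Ioc u v)] g := by
    rw [Filter.EventuallyEq, ae_restrict_iff' measurableSet_Ioc]
    filter_upwards [hg, hne] with t ht hn hm
    exact (ht ⟨hm.1, lt_of_le_of_ne hm.2 hn⟩).1.deriv
  have hpos : 0 ≤ᵐ[volume.restrict (Ioc u v)] deriv G := by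
    rw [Filter.EventuallyLE, ae_restrict_iff' measurableSet_Ioc]
    filter_upwards [hg, hne] with t ht hn hm
    have := (ht ⟨hm.1, lt_of_le_of_ne hm.2 hn⟩)
    rw [this.1.deriv]; exact this.2
  rw [← h2, intervalIntegral.integral_of_le huv, ofReal_integral_eq_lintegral_ofReal h1.1 hpos]
  refine lintegral_congr_ae ?_
  filter_upwards [hEq] with t ht
  rw [ht]

lemma ftc_open {p q : ℝ} (hpq : p < q) {G g : ℝ → ℝ} (hc : ContinuousOn G (Icc p q))
    (hac : ∀ u v, p < u → u ≤ v → v < q → AbsolutelyContinuousOnInterval G u v)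
    (hg : ∀ᵐ t, t ∈ Ioo p q → HasDerivAt G (g t) t ∧ 0 ≤ g t) :
    ∫⁻ t in Ioo p q, ENNReal.ofReal (g t) = ENNReal.ofReal (G q - G p) := by
  have hm : AEMeasurable (fun t => ENNReal.ofReal (g t)) (volume.restrict (Ioo p q)) := by
    refine AEMeasurable.ennreal_ofReal ?_
    refine ⟨deriv G, measurable_deriv G, ?_⟩
    rw [Filter.EventuallyEq, ae_restrict_iff' measurableSet_Ioo]
    filter_upwards [hg] with t ht hm
    exact (ht hm).1.deriv.symm
  obtain ⟨u, -, hu, hul⟩ := exists_seq_strictAnti_tendsto' (show p < (p+q)/2 by linarith)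
  obtain ⟨v, -, hv, hvl⟩ := exists_seq_strictMono_tendsto' (show (p+q)/2 < q by linarith)
  have hcov := aecover_Ioo_of_Ioc (μ := volume) (l := atTop) hul hvl
  have h1 := hcov.lintegral_tendsto_of_countably_generated hm
  refine tendsto_nhds_unique h1 ?_
  have h2 : ∀ n, ∫⁻ t in Ioc (u n) (v n), ENNReal.ofReal (g t) ∂(volume.restrict (Ioo p q)) = 
      ENNReal.ofReal (G (v n) - G (u n)) := by
    intro n
    have a1 := hu n
    have a2 := hv n
    rw [Measure.restrict_restrict measurableSet_Ioc, inter_eq_left.2]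
    · apply ftc_ac (by linarith [a1.2, a2.1]) (hac _ _ a1.1 (by linarith [a1.2, a2.1]) a2.2)
      filter_upwards [hg] with t ht hm
      exact ht ⟨a1.1.trans hm.1, hm.2.trans a2.2⟩
    · intro t ht
      exact ⟨a1.1.trans ht.1, ht.2.trans_lt a2.2⟩
  simp_rw [h2]
  refine (ENNReal.continuous_ofReal.tendsto _).comp ?_
  have e1 : Tendsto v atTop (𝓝[Icc p q] q) := tendsto_nhdsWithin_iff.2 ⟨hvl, Eventually.of_forall
    fun n => ⟨by linarith [(hv n).1], (hv n).2.le⟩⟩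
  have e2 : Tendsto u atTop (𝓝[Icc p q] p) := tendsto_nhdsWithin_iff.2 ⟨hul, Eventually.of_forall
    fun n => ⟨(hu n).1.le, by linarith [(hu n).2]⟩⟩
  exact ((hc q ⟨hpq.le, le_rfl⟩).tendsto.comp e1).sub ((hc p ⟨le_rfl, hpq.le⟩).tendsto.comp e2)

lemma lintegral_prod_fin (n : ℕ) (f : Fin n → ℝ → ℝ≥0∞) (hf : ∀ i, Measurable (f i)) :
    ∫⁻ y : Fin n → ℝ, ∏ i, f i (y i) = ∏ i, ∫⁻ t, f i t := by
  induction n with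
  | zero => simp [volume_pi]
  | succ n ih =>
    have := (volume_preserving_piFinSuccAbove (fun _ : Fin (n+1) => ℝ) 0).symm
    rw [← this.lintegral_comp_emb (MeasurableEquiv.measurableEmbedding _)]
    simp_rw [MeasurableEquiv.piFinSuccAbove_symm_apply, Fin.insertNthEquiv,
        Fin.prod_univ_succ, Fin.insertNth_zero]
    simp only [Equiv.coe_fn_mk, Fin.cons_zero, Fin.cons_succ]
    rw [← ih _ (fun i => hf _), Measure.volume_eq_prod]
    exact lintegral_prod_mul (hf 0).aemeasurable (Measurable.aemeasurable
      (Finset.measurable_prod _ fun (k : Fin n) _ => (hf k.succ).comp (measurable_pi_apply k)))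

lemma term_int (n : ℕ) (j : Fin (n+1)) (B : ℝ → ℝ≥0∞) (hB : Measurable B) (a0 : ℝ → ℝ≥0∞)
    (ha : Measurable a0) (S : Fin n → Set ℝ) (hS : ∀ k, MeasurableSet (S k)) :
    ∫⁻ u : Fin (n+1) → ℝ, B (u j) * ∏ k, (Iio (u j) ∩ S k).indicator a0 (u (j.succAbove k)) =
    ∫⁻ s, B s * ∏ k, ∫⁻ y in Iio s ∩ S k, a0 y := by
  have := (volume_preserving_piFinSuccAbove (fun _ : Fin (n+1) => ℝ) j).symm
  have hmm : ∀ k, Measurable fun p : ℝ × ℝ => (Iio p.1 ∩ S k).indicator a0 p.2 := by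
    intro k
    have : (fun p : ℝ × ℝ => (Iio p.1 ∩ S k).indicator a0 p.2) = 
      ({p : ℝ × ℝ | p.2 < p.1} ∩ Prod.snd ⁻¹' (S k)).indicator (fun p => a0 p.2) := by
      ext p; simp [indicator]
    rw [this]
    exact (ha.comp measurable_snd).indicator ((measurableSet_lt measurable_snd measurable_fst).inter
      (measurable_snd (hS k)))
  rw [← this.lintegral_comp_emb (MeasurableEquiv.measurableEmbedding _)]
  simp_rw [MeasurableEquiv.piFinSuccAbove_symm_apply, Fin.insertNthEquiv]
  simp only [Equiv.coe_fn_mk, Fin.insertNth_apply_same, Fin.insertNth_apply_succAbove]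
  rw [Measure.volume_eq_prod, lintegral_prod]
  · refine lintegral_congr fun s => ?_
    have hms : ∀ k, Measurable fun y : ℝ => (Iio s ∩ S k).indicator a0 y := fun k => 
      ha.indicator (measurableSet_Iio.inter (hS k))
    simp only []
    rw [lintegral_const_mul]
    · rw [lintegral_prod_fin n (fun k y => (Iio s ∩ S k).indicator a0 y) hms]
      simp_rw [lintegral_indicator (measurableSet_Iio.inter (hS _))]
    · exact Finset.measurable_prod _ fun k _ => (hms k).comp (measurable_pi_apply k)
  · refine Measurable.aemeasurable ?_
    refine (hB.comp measurable_fst).mul (Finset.measurable_prod _ fun k _ => ?_)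
    exact (hmm k).comp (measurable_fst.prodMk ((measurable_pi_apply k).comp measurable_snd))

def LL {E : Type*} [PseudoEMetricSpace E] (f : ℝ → E) (x : ℝ) : Prop :=
  ∃ K, ∃ t ∈ 𝓝 x, LipschitzOnWith K f t

lemma LL.comp' {E : Type*} [NormedAddCommGroup E] [NormedSpace ℝ E] {f : ℝ → E} {x : ℝ}
    (hf : LL f x) {φ : E → ℝ} (hφ : ContDiffAt ℝ 1 φ (f x)) : LL (fun y => φ (f y)) x := by
  obtain ⟨K, t, ht, hK⟩ := hf
  obtain ⟨K', t', ht', hK'⟩ := hφ.exists_lipschitzOnWith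
  have hc : ContinuousAt f x := hK.continuousOn.continuousAt ht
  refine ⟨K' * K, t ∩ f ⁻¹' t', inter_mem ht (hc ht'), ?_⟩
  exact hK'.comp (hK.mono inter_subset_left) (fun y hy => hy.2)

lemma LL.prod {f g : ℝ → ℝ} {x : ℝ} (hf : LL f x) (hg : LL g x) : LL (fun y => (f y, g y)) x := by
  obtain ⟨K, t, ht, hK⟩ := hf
  obtain ⟨K', t', ht', hK'⟩ := hg
  exact ⟨_, t ∩ t', inter_mem ht ht', (hK.mono inter_subset_left).prodMk (hK'.mono inter_subset_right)⟩

lemma ac_of_LL {G : ℝ → ℝ} {u v : ℝ} (huv : u ≤ v) (hG : ∀ x ∈ Icc u v, LL G x) :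
    AbsolutelyContinuousOnInterval G u v := by
  have h1 : LocallyLipschitzOn (Icc u v) G := by
    intro x hx
    obtain ⟨K, t, ht, hK⟩ := hG x hx
    exact ⟨K, t, mem_nhdsWithin_of_mem_nhds ht, hK⟩
  obtain ⟨K, hK⟩ := h1.exists_lipschitzOnWith_of_compact isCompact_Icc
  rw [← uIcc_of_le huv] at hK
  exact hK.absolutelyContinuousOnInterval

lemma onedim (m : ℕ) (δ δ' : ℝ → ℝ) (D : ℝ) (hD : D = (m:ℝ) + 2)
    (hmono : MonotoneOn δ (Set.Icc 0 1))
    (hlip : ∀ s ∈ Set.Icc (0:ℝ) 1, ∀ t ∈ Set.Icc (0:ℝ) 1,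
      |δ s - δ t| ≤ D * |s - t|)
    (h0 : δ 0 = 0) (h1 : δ 1 = 1)
    (hlt : ∀ t ∈ Set.Ioo (0:ℝ) 1, δ t < t)
    (hderiv : ∀ᵐ t ∂(volume.restrict (Set.Icc (0:ℝ) 1)), HasDerivAt δ (δ' t) t)
    (hd' : ∀ t ∈ Set.Icc (0:ℝ) 1, δ' t ∈ Set.Icc (0:ℝ) D)
    (h F a b : ℝ → ℝ)
    (hh : ∀ r, h r = r - δ r)
    (hF : ∀ r, F r = ((D - 1) / D) * ∫ s in (1/2 : ℝ)..r, 1 / h s)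
    (ha : ∀ r, a r = ((D - δ' r) / D) * h r ^ (-1 + 1/D) * Real.exp (F r))
    (hb : ∀ r, b r = (δ' r / D) * h r ^ (-1 + 1/D) *
      Real.exp (-(D - 1) * F r))
    (α : ℝ → ℝ≥0∞) (hα : ∀ s, α s = ∫⁻ t in Ioo 0 s, ENNReal.ofReal (a t)) :
    AEMeasurable a (volume.restrict (Ioo 0 1)) ∧ AEMeasurable b (volume.restrict (Ioo 0 1)) ∧ 
    (∀ r ∈ Icc (0:ℝ) 1, ∫⁻ s in Ioo 0 r, ENNReal.ofReal (b s) * α s ^ (m+1) = ENNReal.ofReal (δ r / D)) ∧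
    (∀ r ∈ Icc (0:ℝ) 1, α r * ∫⁻ s in Ioo r 1, ENNReal.ofReal (b s) * α s ^ m = 
      ENNReal.ofReal (h r / (m+1))) := by
  have hm0 : (0:ℝ) ≤ m := Nat.cast_nonneg m
  have hD0 : 0 < D := by linarith
  have hpos : ∀ t ∈ Ioo (0:ℝ) 1, 0 < h t := fun t ht => by rw [hh]; linarith [hlt t ht]
  have hfun : h = fun r => r - δ r := funext hh
  have hlipδ : LipschitzOnWith ⟨D, hD0.le⟩ δ (Icc 0 1) := by
    refine LipschitzOnWith.of_dist_le_mul fun s hs t ht => ?_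
    rw [Real.dist_eq, Real.dist_eq]; exact hlip s hs t ht
  have hδc : ContinuousOn δ (Icc 0 1) := hlipδ.continuousOn
  have hhc : ContinuousOn h (Icc 0 1) := by rw [hfun]; exact continuousOn_id.sub hδc
  have hhca : ∀ x ∈ Ioo (0:ℝ) 1, ContinuousAt h x := fun x hx => 
    hhc.continuousAt (Icc_mem_nhds hx.1 hx.2)
  have hder : ∀ᵐ t : ℝ, t ∈ Icc (0:ℝ) 1 → HasDerivAt δ (δ' t) t := 
    (ae_restrict_iff' measurableSet_Icc).1 hderiv
  have hinvc : ContinuousOn (fun s => 1 / h s) (Ioo 0 1) := fun x hx =>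
    (continuousAt_const.div (hhca x hx) (hpos x hx).ne').continuousWithinAt
  -- F
  have hFs : ∀ x ∈ Ioo (0:ℝ) 1, HasStrictDerivAt F (((D-1)/D) * (1 / h x)) x := by
    intro x hx
    have : F = fun r => ((D - 1) / D) * ∫ s in (1/2 : ℝ)..r, 1 / h s := funext hF
    rw [this]
    refine HasStrictDerivAt.const_mul _ ?_
    refine intervalIntegral.integral_hasStrictDerivAt_right ?_ ?_ ?_
    · refine (hinvc.mono ?_).intervalIntegrable
      exact (ordConnected_Ioo).uIcc_subset (by norm_num) hx
    · exact hinvc.stronglyMeasurableAtFilter isOpen_Ioo x hx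
    · exact hinvc.continuousAt (Ioo_mem_nhds hx.1 hx.2)
  have hFc : ContinuousOn F (Ioo 0 1) := fun x hx => (hFs x hx).hasDerivAt.continuousAt.continuousWithinAt
  have hFle : ∀ x, 0 < x → x ≤ 1/2 → F x ≤ 0 := by
    intro x hx hx2
    rw [hF, intervalIntegral.integral_symm]
    have : 0 ≤ ∫ s in x..(1/2 : ℝ), 1 / h s := by
      refine intervalIntegral.integral_nonneg hx2 fun u hu => ?_
      exact (one_div_pos.2 (hpos u ⟨hx.trans_le hu.1, by linarith [hu.2]⟩)).le
    have h2 : 0 ≤ (D-1)/D := div_nonneg (by linarith) hD0.le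
    nlinarith [mul_nonneg h2 this]
  have hFge : ∀ x, 1/2 ≤ x → x < 1 → 0 ≤ F x := by
    intro x hx hx2
    rw [hF]
    have : 0 ≤ ∫ s in (1/2 : ℝ)..x, 1 / h s := by
      refine intervalIntegral.integral_nonneg hx fun u hu => ?_
      exact (one_div_pos.2 (hpos u ⟨by linarith [hu.1], by linarith [hu.2]⟩)).le
    have h2 : 0 ≤ (D-1)/D := div_nonneg (by linarith) hD0.le
    exact mul_nonneg h2 this
  -- G
  let G : ℝ → ℝ → ℝ → ℝ := fun p q r => h r ^ p * Real.exp (q * F r)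
  have hGLL : ∀ p q k, ∀ x ∈ Ioo (0:ℝ) 1, LL (fun r => k * G p q r) x := by
    intro p q k x hx
    have l1 : LL h x := by
      rw [hfun]
      exact ⟨_, Icc 0 1, Icc_mem_nhds hx.1 hx.2, (LipschitzWith.id.lipschitzOnWith).sub hlipδ⟩
    have l2 : LL F x := by
      obtain ⟨K, s, hs, hK⟩ := (hFs x hx).hasStrictFDerivAt.exists_lipschitzOnWith
      exact ⟨K, s, hs, hK⟩
    have l3 := (l1.prod l2).comp' (φ := fun z : ℝ × ℝ => k * (z.1 ^ p * Real.exp (q * z.2))) ?_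
    · exact l3
    · have := (hpos x hx).ne'
      refine contDiffAt_const.mul (ContDiffAt.mul ?_ ?_)
      · exact contDiffAt_fst.rpow_const_of_ne this
      · exact (contDiffAt_const.mul contDiffAt_snd).exp
  have hGd : ∀ p q, ∀ x ∈ Ioo (0:ℝ) 1, HasDerivAt δ (δ' x) x → 
      HasDerivAt (G p q) (h x ^ (p-1) * Real.exp (q * F x) * (p * (1 - δ' x) + q * ((D-1)/D))) x := by
    intro p q x hx hdx
    have hx0 := hpos x hx
    have e1 : HasDerivAt h (1 - δ' x) x := by rw [hfun]; exact (hasDerivAt_id x).sub hdx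
    have e2 := e1.rpow_const (p := p) (Or.inl hx0.ne')
    have e3 := ((hFs x hx).hasDerivAt.const_mul q).exp
    refine (e2.mul e3).congr_deriv ?_
    have : h x ^ p = h x ^ (p-1) * h x := by
      rw [← Real.rpow_add_one hx0.ne']; ring_nf
    rw [this]
    field_simp
  have hGc : ∀ p q, ContinuousOn (G p q) (Ioo 0 1) := by
    intro p q x hx
    refine ContinuousAt.continuousWithinAt ?_
    refine ((hhca x hx).rpow_const (Or.inl (hpos x hx).ne')).mul ?_
    exact (continuousAt_const.mul (hFs x hx).hasDerivAt.continuousAt).rexp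
  have hG0 : ∀ p, 0 < p → ContinuousWithinAt (G p 1) (Ici 0) 0 := by
    intro p hp
    have hz : h 0 = 0 := by rw [hh, h0]; ring
    have hg0 : G p 1 0 = 0 := by simp [G, hz, Real.zero_rpow hp.ne']
    have hl : Tendsto (fun r => h r ^ p) (𝓝[Ici 0] 0) (𝓝 0) := by
      have t1 : ContinuousWithinAt h (Ici 0) 0 := 
        (hhc 0 (by norm_num)).mono_of_mem_nhdsWithin (Icc_mem_nhdsGE (by norm_num))
      have := (t1.rpow_const (p := p) (Or.inr hp.le)).tendsto
      simpa [hz, Real.zero_rpow hp.ne'] using this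
    rw [ContinuousWithinAt, hg0]
    have hmem : Icc (0:ℝ) (1/2) ∈ 𝓝[Ici 0] 0 := Icc_mem_nhdsGE (by norm_num)
    refine tendsto_of_tendsto_of_tendsto_of_le_of_le' tendsto_const_nhds hl ?_ ?_
    · filter_upwards [hmem] with x hx
      rcases hx.1.eq_or_lt with rfl | h'
      · exact hg0.ge
      · exact mul_nonneg (Real.rpow_nonneg (hpos x ⟨h', by linarith [hx.2]⟩).le _) (Real.exp_pos _).le
    · filter_upwards [hmem] with x hx
      rcases hx.1.eq_or_lt with rfl | h'
      · rw [hg0, hz, Real.zero_rpow hp.ne']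
      · have h3 := Real.rpow_nonneg (hpos x ⟨h', by linarith [hx.2]⟩).le p
        have h4 : Real.exp (1 * F x) ≤ 1 := by
          rw [Real.exp_le_one_iff]; linarith [hFle x h' hx.2]
        exact mul_le_of_le_one_right h3 h4
  have hG1 : ∀ p, 0 < p → ContinuousWithinAt (G p (-1)) (Iic 1) 1 := by
    intro p hp
    have hz : h 1 = 0 := by rw [hh, h1]; ring
    have hg0 : G p (-1) 1 = 0 := by simp [G, hz, Real.zero_rpow hp.ne']
    have hl : Tendsto (fun r => h r ^ p) (𝓝[Iic 1] 1) (𝓝 0) := by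
      have t1 : ContinuousWithinAt h (Iic 1) 1 := 
        (hhc 1 (by norm_num)).mono_of_mem_nhdsWithin (Icc_mem_nhdsLE (by norm_num))
      have := (t1.rpow_const (p := p) (Or.inr hp.le)).tendsto
      simpa [hz, Real.zero_rpow hp.ne'] using this
    rw [ContinuousWithinAt, hg0]
    have hmem : Icc (1/2:ℝ) 1 ∈ 𝓝[Iic 1] 1 := Icc_mem_nhdsLE (by norm_num)
    refine tendsto_of_tendsto_of_tendsto_of_le_of_le' tendsto_const_nhds hl ?_ ?_
    · filter_upwards [hmem] with x hx
      rcases hx.2.eq_or_lt with rfl | h'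
      · exact hg0.ge
      · exact mul_nonneg (Real.rpow_nonneg (hpos x ⟨by linarith [hx.1], h'⟩).le _) (Real.exp_pos _).le
    · filter_upwards [hmem] with x hx
      rcases hx.2.eq_or_lt with rfl | h'
      · rw [hg0, hz, Real.zero_rpow hp.ne']
      · have h3 := Real.rpow_nonneg (hpos x ⟨by linarith [hx.1], h'⟩).le p
        have h4 : Real.exp (-1 * F x) ≤ 1 := by
          rw [Real.exp_le_one_iff]; linarith [hFge x hx.1 h']
        exact mul_le_of_le_one_right h3 h4
  have hDi : 0 < 1 / D := by positivity
  have hDi1 : 1 / D < 1 := by rw [div_lt_one hD0]; linarith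
  -- α
  have hαv : ∀ s ∈ Ioo (0:ℝ) 1, α s = ENNReal.ofReal (G (1/D) 1 s) := by
    intro s hs
    have hg0 : G (1/D) 1 0 = 0 := by 
      have hz : h 0 = 0 := by rw [hh, h0]; ring
      simp only [G]
      rw [hz, Real.zero_rpow hDi.ne', zero_mul]
    rw [hα]
    have := ftc_open hs.1 (G := G (1/D) 1) (g := a) ?_ ?_ ?_
    · rw [this, hg0, sub_zero]
    · intro x hx
      rcases hx.1.eq_or_lt with rfl | h'
      · exact (hG0 _ hDi).mono fun y hy => hy.1
      · exact ((hGc (1/D) 1).continuousAt (Ioo_mem_nhds h' (hx.2.trans_lt hs.2))).continuousWithinAt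
    · intro u v hu huv hv
      refine ac_of_LL huv fun x hx => ?_
      simpa using hGLL (1/D) 1 1 x ⟨hu.trans_le hx.1, hx.2.trans_lt (hv.trans hs.2)⟩
    · filter_upwards [hder] with t ht hts
      have ht1 : t ∈ Ioo (0:ℝ) 1 := ⟨hts.1, hts.2.trans hs.2⟩
      have hdt := hd' t (Ioo_subset_Icc_self ht1)
      constructor
      · refine (hGd (1/D) 1 t ht1 (ht (Ioo_subset_Icc_self ht1))).congr_deriv ?_
        rw [ha, show (1/D - 1) = -1 + 1/D by ring]
        simp only [one_mul]
        field_simp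
        ring
      · rw [ha]
        have := hpos t ht1
        have : 0 ≤ D - δ' t := by linarith [hdt.2]
        positivity
  have hbpos : ∀ s ∈ Ioo (0:ℝ) 1, 0 ≤ b s := by
    intro s hs
    have := hpos s hs
    have := (hd' s (Ioo_subset_Icc_self hs)).1
    rw [hb]; positivity
  have hbα : ∀ k : ℕ, ∀ s ∈ Ioo (0:ℝ) 1, ENNReal.ofReal (b s) * α s ^ k = 
      ENNReal.ofReal (δ' s / D * h s ^ (-1 + (k+1)/D) * Real.exp ((k - (D-1)) * F s)) := by
    intro k s hs
    have hs0 := hpos s hs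
    rw [hαv s hs, ← ENNReal.ofReal_pow (by positivity), ← ENNReal.ofReal_mul (hbpos s hs), hb]
    congr 1
    simp only [G]
    rw [mul_pow, ← Real.rpow_natCast (h s ^ (1/D)), ← Real.rpow_mul hs0.le, ← Real.exp_nat_mul,
      show -1 + ((k:ℝ)+1)/D = (-1 + 1/D) + (1/D*k) by ring, Real.rpow_add hs0 (-1 + 1/D),
      show ((k:ℝ) - (D-1)) * F s = (-(D-1) * F s) + k * (1 * F s) by ring, Real.exp_add]
    ring
  have hδm : AEMeasurable δ' (volume.restrict (Ioo 0 1)) := by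
    refine ⟨deriv δ, measurable_deriv δ, ?_⟩
    rw [Filter.EventuallyEq, ae_restrict_iff' measurableSet_Ioo]
    filter_upwards [hder] with t ht hm
    exact (ht (Ioo_subset_Icc_self hm)).deriv.symm
  have hhm : AEMeasurable h (volume.restrict (Ioo 0 1)) :=
    (hhc.mono Ioo_subset_Icc_self).aemeasurable measurableSet_Ioo
  have hFm : AEMeasurable F (volume.restrict (Ioo 0 1)) := hFc.aemeasurable measurableSet_Ioo
  refine ⟨?_, ?_, ?_, ?_⟩
  · rw [funext ha]
    exact (((aemeasurable_const.sub hδm).div_const _).mul (hhm.pow_const _)).mul 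
      (Real.measurable_exp.comp_aemeasurable hFm)
  · rw [funext hb]
    exact ((hδm.div_const _).mul (hhm.pow_const _)).mul 
      (Real.measurable_exp.comp_aemeasurable (hFm.const_mul _))
  · intro r hr
    rcases hr.1.eq_or_lt with rfl | hr0
    · simp [h0]
    have := ftc_open hr0 (G := fun t => δ t / D) (g := fun t => δ' t / D) ?_ ?_ ?_
    · simp only [h0, zero_div, sub_zero] at this
      rw [← this]
      refine setLIntegral_congr_fun measurableSet_Ioo fun s hs => ?_
      have hs1 : s ∈ Ioo (0:ℝ) 1 := ⟨hs.1, hs.2.trans_le hr.2⟩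
      rw [hbα _ s hs1]
      congr 1
      rw [show (-1 + (((m+1:ℕ):ℝ)+1)/D) = 0 by rw [hD]; push_cast; field_simp; ring,
        show (((m+1:ℕ):ℝ) - (D-1)) = 0 by rw [hD]; push_cast; ring]
      simp
    · exact (hδc.mono (Icc_subset_Icc_right hr.2)).div_const _
    · intro u v hu huv hv
      have hL := hlipδ.mono (s := uIcc u v) (by
        rw [uIcc_of_le huv]; exact Icc_subset_Icc hu.le (hv.le.trans hr.2))
      have := hL.absolutelyContinuousOnInterval.const_mul (1/D)
      refine (congrArg (fun f => AbsolutelyContinuousOnInterval f u v) ?_).mp this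
      ext t; ring
    · filter_upwards [hder] with t ht hts
      have ht1 : t ∈ Icc (0:ℝ) 1 := ⟨hts.1.le, hts.2.le.trans hr.2⟩
      exact ⟨(ht ht1).div_const _, div_nonneg (hd' t ht1).1 hD0.le⟩
  · intro r hr
    rcases hr.1.eq_or_lt with rfl | hr0
    · simp [hα, hh, h0]
    rcases hr.2.eq_or_lt with rfl | hr1
    · simp [hh, h1]
    have hrr : r ∈ Ioo (0:ℝ) 1 := ⟨hr0, hr1⟩
    have hg1 : G (1 - 1/D) (-1) 1 = 0 := by 
      have hz : h 1 = 0 := by rw [hh, h1]; ring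
      simp only [G]
      rw [hz, Real.zero_rpow (by linarith), zero_mul]
    have := ftc_open hr1 (G := fun t => (-(1/((m:ℝ)+1))) * G (1 - 1/D) (-1) t) 
      (g := fun s => δ' s / D * h s ^ (-1 + ((m:ℝ)+1)/D) * Real.exp ((m - (D-1)) * F s)) ?_ ?_ ?_
    · rw [setLIntegral_congr_fun measurableSet_Ioo (fun s hs => hbα m s ⟨hr0.trans hs.1, hs.2⟩), this,
        hαv r hrr, ← ENNReal.ofReal_mul (mul_nonneg (Real.rpow_nonneg (hpos r hrr).le _) (Real.exp_pos _).le),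
        hg1]
      congr 1
      simp only [G]
      have e1 : h r = h r ^ (1/D) * h r ^ (1 - 1/D) := by
        rw [← Real.rpow_add (hpos r hrr)]; simp
      have e2 : Real.exp (1 * F r) * Real.exp (-1 * F r) = 1 := by
        rw [← Real.exp_add]; simp
      calc _ = (h r ^ (1/D) * h r ^ (1 - 1/D)) * (Real.exp (1 * F r) * Real.exp (-1 * F r)) / (m+1) := by ring
        _ = _ := by rw [e2, ← e1, mul_one]
    · refine ContinuousOn.mul continuousOn_const ?_
      intro x hx
      rcases hx.2.eq_or_lt with rfl | h'
      · exact (hG1 _ (by linarith)).mono fun y hy => hy.2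
      · exact ((hGc (1-1/D) (-1)).continuousAt (Ioo_mem_nhds (hr0.trans_le hx.1) h')).continuousWithinAt
    · intro u v hu huv hv
      exact ac_of_LL huv fun x hx => hGLL _ _ _ x ⟨hr0.trans (hu.trans_le hx.1), hx.2.trans_lt hv⟩
    · filter_upwards [hder] with t ht hts
      have ht1 : t ∈ Ioo (0:ℝ) 1 := ⟨hr0.trans hts.1, hts.2⟩
      have hdt := hd' t (Ioo_subset_Icc_self ht1)
      constructor
      · refine ((hGd (1-1/D) (-1) t ht1 (ht (Ioo_subset_Icc_self ht1))).const_mul _).congr_deriv ?_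
        rw [show (1 - 1/D - 1) = -1 + ((m:ℝ)+1)/D by rw [hD]; field_simp; ring,
          show ((m:ℝ) - (D-1)) = -1 by rw [hD]; ring]
        generalize h t ^ (-1 + ((m:ℝ)+1)/D) = X
        generalize Real.exp (-1 * F t) = Y
        rw [hD]
        field_simp
        ring
      · have := hpos t ht1
        have := hdt.1
        positivity

lemma term_meas (n : ℕ) (j : Fin (n+1)) (B : ℝ → ℝ≥0∞) (hB : Measurable B) (a0 : ℝ → ℝ≥0∞)
    (ha : Measurable a0) (S : Fin n → Set ℝ) (hS : ∀ k, MeasurableSet (S k)) :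
    Measurable fun u : Fin (n+1) → ℝ => 
      B (u j) * ∏ k, (Iio (u j) ∩ S k).indicator a0 (u (j.succAbove k)) := by
  refine (hB.comp (measurable_pi_apply j)).mul (Finset.measurable_prod _ fun k _ => ?_)
  have : (fun u : Fin (n+1) → ℝ => (Iio (u j) ∩ S k).indicator a0 (u (j.succAbove k))) = 
      ({u : Fin (n+1) → ℝ | u (j.succAbove k) < u j} ∩ (fun u => u (j.succAbove k)) ⁻¹' (S k)).indicator 
        (fun u => a0 (u (j.succAbove k))) := by
    ext p; simp [indicator]
  rw [this]
  exact (ha.comp (measurable_pi_apply _)).indicator 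
    ((measurableSet_lt (measurable_pi_apply (j.succAbove k)) (measurable_pi_apply j)).inter
      ((measurable_pi_apply (j.succAbove k)) (hS k)))

lemma D_eq (n : ℕ) (u : Fin (n+1) → ℝ) (hinj : ∀ i j, i ≠ j → u i ≠ u j) (a b : ℝ → ℝ) 
    (a0 b0 : ℝ → ℝ≥0∞) (ha0 : ∀ k, a0 (u k) = ENNReal.ofReal (a (u k))) 
    (hb0 : ∀ k, b0 (u k) = ENNReal.ofReal (b (u k)))
    (ha : ∀ k, 0 ≤ a (u k)) (hb : ∀ k, 0 ≤ b (u k)) (i : Fin (n+1)) (r : ℝ)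
    (g : Fin (n+1) → Set ℝ) (hg : ∀ k, g k = if k = i then Iic r else univ) :
    ∑ j, (g j).indicator b0 (u j) * ∏ k, (Iio (u j) ∩ g (j.succAbove k)).indicator a0 (u (j.succAbove k))
    = ENNReal.ofReal ((b (⨆ i, u i) *
      ∏ i ∈ Finset.univ.filter (fun i => u i ≠ ⨆ j, u j), a (u i)) * (if u i ≤ r then 1 else 0)) := by
  obtain ⟨j0, hj0⟩ := Finite.exists_max u
  have hsup : (⨆ i, u i) = u j0 := 
    le_antisymm (ciSup_le hj0) (le_ciSup (Set.finite_range u).bddAbove j0)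
  have hlt : ∀ k, k ≠ j0 → u k < u j0 := fun k hk => lt_of_le_of_ne (hj0 k) (hinj k j0 hk)
  rw [hsup, Finset.sum_eq_single j0]
  · rw [Finset.prod_filter, Fin.prod_univ_succAbove _ j0]
    have e : ∀ k, u (j0.succAbove k) ≠ u j0 := fun k => hinj _ _ (Fin.succAbove_ne j0 k)
    simp only [ne_eq, not_true_eq_false, if_false, one_mul, e, not_false_eq_true, if_true]
    by_cases hir : u i ≤ r
    · have hgm : ∀ k, u k ∈ g k := by
        intro k; rw [hg]; split_ifs with hk
        · rw [hk]; exact hir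
        · trivial
      rw [if_pos hir, mul_one, indicator_of_mem (hgm j0), hb0, ENNReal.ofReal_mul (hb j0),
        ENNReal.ofReal_prod_of_nonneg (fun k _ => ha _)]
      congr 1
      refine Finset.prod_congr rfl fun k _ => ?_
      have hmm : u (j0.succAbove k) ∈ Iio (u j0) ∩ g (j0.succAbove k) :=
        ⟨hlt _ (Fin.succAbove_ne j0 k), hgm _⟩
      rw [indicator_of_mem hmm, ha0]
    · rw [if_neg hir, mul_zero, ENNReal.ofReal_zero, mul_eq_zero]
      have hn : u i ∉ g i := by rw [hg, if_pos rfl]; exact hir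
      by_cases hi : i = j0
      · left; rw [← hi]; exact indicator_of_notMem hn _
      · right
        obtain ⟨k, hk⟩ := Fin.exists_succAbove_eq hi
        refine Finset.prod_eq_zero (Finset.mem_univ k) ?_
        rw [hk]; exact indicator_of_notMem (fun h => hn h.2) _
  · intro j _ hj
    obtain ⟨k, hk⟩ := Fin.exists_succAbove_eq hj.symm
    rw [Finset.prod_eq_zero (Finset.mem_univ k), mul_zero]
    rw [hk]
    exact indicator_of_notMem (fun h => absurd h.1 (not_lt.2 (hj0 j))) _
  · simp

lemma ae_inj (n : ℕ) : ∀ᵐ u : Fin n → ℝ, ∀ i j, i ≠ j → u i ≠ u j := by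
  rw [ae_all_iff]; intro i
  rw [ae_all_iff]; intro j
  by_cases hij : i = j
  · simp [hij]
  let L : (Fin n → ℝ) →ₗ[ℝ] ℝ := 
    (LinearMap.proj i : (Fin n → ℝ) →ₗ[ℝ] ℝ) - (LinearMap.proj j : (Fin n → ℝ) →ₗ[ℝ] ℝ)
  have hL : LinearMap.ker L ≠ ⊤ := by
    intro h
    have : (Pi.single i 1 : Fin n → ℝ) ∈ LinearMap.ker L := by rw [h]; trivial
    rw [LinearMap.mem_ker] at this
    simp [L, Pi.single_apply, Ne.symm hij] at this
  have := Measure.addHaar_submodule (volume : Measure (Fin n → ℝ)) _ hL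
  rw [ae_iff]
  refine measure_mono_null (fun u hu => ?_) this
  simp only [ne_eq, not_forall, not_not, mem_setOf_eq] at hu
  obtain ⟨_, hu⟩ := hu
  simp [L, hu]

lemma ae_coord (n : ℕ) {P : ℝ → Prop} (hP : ∀ᵐ t, P t) : ∀ᵐ u : Fin n → ℝ, ∀ k, P (u k) := by
  rw [ae_all_iff]; intro k
  exact (Measure.quasiMeasurePreserving_eval (μ := fun _ : Fin n => (volume : Measure ℝ)) k).ae hP

lemma total (m : ℕ) (a b : ℝ → ℝ) (hma : AEMeasurable a (volume.restrict (Ioo 0 1)))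
    (hmb : AEMeasurable b (volume.restrict (Ioo 0 1)))
    (hapos : ∀ t ∈ Icc (0:ℝ) 1, 0 ≤ a t) (hbpos : ∀ t ∈ Icc (0:ℝ) 1, 0 ≤ b t) 
    (α : ℝ → ℝ≥0∞) (hα : ∀ s, α s = ∫⁻ t in Ioo 0 s, ENNReal.ofReal (a t))
    (r x y : ℝ) (hr : r ∈ Icc (0:ℝ) 1) (hx : 0 ≤ x) (hy : 0 ≤ y)
    (H1 : ∫⁻ s in Ioo 0 r, ENNReal.ofReal (b s) * α s ^ (m+1) = ENNReal.ofReal x)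
    (H2 : α r * ∫⁻ s in Ioo r 1, ENNReal.ofReal (b s) * α s ^ m = ENNReal.ofReal y)
    (i : Fin (m+1+1)) :
    ∫ u in Set.univ.pi (fun _ : Fin (m+1+1) => Set.Icc (0:ℝ) 1), (b (⨆ i, u i) *
      ∏ i ∈ Finset.univ.filter (fun i => u i ≠ ⨆ j, u j), a (u i)) * (if u i ≤ r then 1 else 0)
     = x + (m+1) * (x + y) := by
  let a0 : ℝ → ℝ≥0∞ := (Ioo (0:ℝ) 1).indicator fun t => ENNReal.ofReal (hma.mk a t)
  let b0 : ℝ → ℝ≥0∞ := (Ioo (0:ℝ) 1).indicator fun t => ENNReal.ofReal (hmb.mk b t)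
  have ha0m : Measurable a0 := hma.measurable_mk.ennreal_ofReal.indicator measurableSet_Ioo
  have hb0m : Measurable b0 := hmb.measurable_mk.ennreal_ofReal.indicator measurableSet_Ioo
  have ha0 : ∀ᵐ t, t ∈ Ioo (0:ℝ) 1 → a0 t = ENNReal.ofReal (a t) := by
    filter_upwards [(ae_restrict_iff' measurableSet_Ioo).1 hma.ae_eq_mk] with t ht hm
    simp only [a0, indicator_of_mem hm, ht hm]
  have hb0 : ∀ᵐ t, t ∈ Ioo (0:ℝ) 1 → b0 t = ENNReal.ofReal (b t) := by
    filter_upwards [(ae_restrict_iff' measurableSet_Ioo).1 hmb.ae_eq_mk] with t ht hm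
    simp only [b0, indicator_of_mem hm, ht hm]
  have hαT : ∀ T, MeasurableSet T → ∫⁻ t in T, a0 t = ∫⁻ t in Ioo 0 1 ∩ T, ENNReal.ofReal (a t) := by
    intro T hT
    simp only [a0]
    rw [setLIntegral_indicator measurableSet_Ioo]
    refine setLIntegral_congr_fun_ae (measurableSet_Ioo.inter hT) ?_
    filter_upwards [(ae_restrict_iff' measurableSet_Ioo).1 hma.ae_eq_mk] with t ht hm
    rw [ht hm.1]
  have hαm : Measurable α := by
    refine Monotone.measurable fun s t hst => ?_
    rw [hα, hα]; exact lintegral_mono_set (Ioo_subset_Ioo_right hst)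
  have hα1 : ∀ s ∈ Ioo (0:ℝ) 1, ∫⁻ t in Iio s, a0 t = α s := by
    intro s hs
    rw [hαT _ measurableSet_Iio, hα]
    congr 2
    ext t; simp only [mem_inter_iff, mem_Ioo, mem_Iio]
    constructor
    · rintro ⟨⟨h1, h2⟩, h3⟩; exact ⟨h1, h3⟩
    · rintro ⟨h1, h3⟩; exact ⟨⟨h1, h3.trans hs.2⟩, h3⟩
  have hβ1 : ∀ s ∈ Ioo (0:ℝ) 1, s < r → ∫⁻ t in Iio s ∩ Iic r, a0 t = α s := by
    intro s hs hsr
    rw [← hα1 s hs, inter_eq_left.2]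
    intro t ht; exact (lt_trans ht hsr).le
  have hβ2 : ∀ s ∈ Ioo (0:ℝ) 1, r < s → ∫⁻ t in Iio s ∩ Iic r, a0 t = α r := by
    intro s hs hsr
    rw [hαT _ (measurableSet_Iio.inter measurableSet_Iic), hα, setLIntegral_congr Ioo_ae_eq_Ioc]
    congr 2
    ext t; simp only [mem_inter_iff, mem_Ioo, mem_Iio, mem_Iic, mem_Ioc]
    constructor
    · rintro ⟨⟨h1, h2⟩, h3, h4⟩; exact ⟨h1, h4⟩
    · rintro ⟨h1, h3⟩; exact ⟨⟨h1, by linarith [hs.2]⟩, by linarith, h3⟩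
  have H1' : ∫⁻ s in Ioo 0 r, b0 s * α s ^ (m+1) = ENNReal.ofReal x := by
    rw [← H1]
    refine setLIntegral_congr_fun_ae measurableSet_Ioo ?_
    filter_upwards [hb0] with t ht hm
    rw [ht ⟨hm.1, hm.2.trans_le hr.2⟩]
  have H2' : α r * ∫⁻ s in Ioo r 1, b0 s * α s ^ m = ENNReal.ofReal y := by
    rw [← H2]
    congr 1
    refine setLIntegral_congr_fun_ae measurableSet_Ioo ?_
    filter_upwards [hb0] with t ht hm
    rw [ht ⟨hr.1.trans_lt hm.1, hm.2⟩]
  have hner : ∀ᵐ t : ℝ, t ≠ r := by simp [ae_iff, measure_singleton]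
  have hne0 : ∀ᵐ t : ℝ, t ≠ 0 := by simp [ae_iff, measure_singleton]
  have hne1 : ∀ᵐ t : ℝ, t ≠ 1 := by simp [ae_iff, measure_singleton]
  have hb00 : ∀ s, s ∉ Ioo (0:ℝ) 1 → b0 s = 0 := fun s hs => indicator_of_notMem hs _
  obtain ⟨g, hg⟩ : ∃ g : Fin (m+1+1) → Set ℝ, ∀ k, g k = if k = i then Iic r else univ := ⟨_, fun _ => rfl⟩
  have hgm : ∀ k, MeasurableSet (g k) := by
    intro k; rw [hg]; split_ifs
    · exact measurableSet_Iic
    · exact MeasurableSet.univ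
  let T : Fin (m+1+1) → (Fin (m+1+1) → ℝ) → ℝ≥0∞ := fun j u => 
    (g j).indicator b0 (u j) * ∏ k, (Iio (u j) ∩ g (j.succAbove k)).indicator a0 (u (j.succAbove k))
  have hTm : ∀ j, Measurable (T j) := fun j =>
    term_meas (m+1) j _ (hb0m.indicator (hgm j)) a0 ha0m (fun k => g (j.succAbove k)) (fun k => hgm _)
  have hTi : ∀ j, ∫⁻ u, T j u = ∫⁻ s, (g j).indicator b0 s * ∏ k, ∫⁻ y in Iio s ∩ g (j.succAbove k), a0 y := fun j =>
    term_int (m+1) j _ (hb0m.indicator (hgm j)) a0 ha0m (fun k => g (j.succAbove k)) (fun k => hgm _)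
  have hT1 : ∫⁻ u, T i u = ENNReal.ofReal x := by
    rw [hTi, ← H1', ← lintegral_indicator measurableSet_Ioo]
    refine lintegral_congr_ae ?_
    filter_upwards [hner] with s hs
    have : ∀ k, g (i.succAbove k) = univ := fun k => by rw [hg, if_neg (Fin.succAbove_ne i k)]
    simp only [this, inter_univ, Finset.prod_const, Finset.card_univ, Fintype.card_fin]
    rw [hg, if_pos rfl]
    by_cases hs1 : s ∈ Ioo (0:ℝ) 1
    · rw [hα1 s hs1]
      rcases lt_or_gt_of_ne hs with h' | h'
      · rw [indicator_of_mem (show s ∈ Iic r from h'.le), indicator_of_mem (show s ∈ Ioo 0 r from ⟨hs1.1, h'⟩)]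
      · rw [indicator_of_notMem (show s ∉ Iic r from not_le.2 h'), 
          indicator_of_notMem (show s ∉ Ioo 0 r from fun h => absurd h.2 (not_lt.2 h'.le)), zero_mul]
    · rw [indicator_of_notMem (show s ∉ Ioo 0 r from fun h => hs1 ⟨h.1, h.2.trans_le hr.2⟩)]
      simp [indicator, hb00 s hs1]
  have hT2 : ∀ j, j ≠ i → ∫⁻ u, T j u = ENNReal.ofReal x + ENNReal.ofReal y := by
    intro j hj
    obtain ⟨k0, hk0⟩ := Fin.exists_succAbove_eq hj.symm
    have hmk : ∀ k : ℕ, Measurable fun s => b0 s * α s ^ k := fun k => hb0m.mul (hαm.pow_const k)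
    rw [hTi, ← H1', ← H2', ← lintegral_const_mul _ (hmk m),
      ← lintegral_indicator measurableSet_Ioo, ← lintegral_indicator measurableSet_Ioo,
      ← lintegral_add_left ((hmk (m+1)).indicator measurableSet_Ioo)]
    refine lintegral_congr_ae ?_
    filter_upwards [hner] with s hs
    have hgj : g j = univ := by rw [hg, if_neg hj]
    have h1 : ∀ k ∈ Finset.univ.erase k0, ∫⁻ y in Iio s ∩ g (j.succAbove k), a0 y = ∫⁻ y in Iio s, a0 y := by
      intro k hk
      rw [hg, if_neg, inter_univ]
      rw [← hk0]
      exact fun h => (Finset.ne_of_mem_erase hk) (Fin.succAbove_right_injective h)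
    rw [← Finset.mul_prod_erase _ _ (Finset.mem_univ k0), Finset.prod_congr rfl h1, hgj, indicator_univ,
      hk0, hg, if_pos rfl, Finset.prod_const, Finset.card_erase_of_mem (Finset.mem_univ _), Finset.card_univ,
      Fintype.card_fin, Nat.add_sub_cancel]
    by_cases hs1 : s ∈ Ioo (0:ℝ) 1
    · rw [hα1 s hs1]
      rcases lt_or_gt_of_ne hs with h' | h'
      · rw [indicator_of_mem (show s ∈ Ioo 0 r from ⟨hs1.1, h'⟩), 
          indicator_of_notMem (show s ∉ Ioo r 1 from fun h => absurd h.1 (not_lt.2 h'.le)), hβ1 s hs1 h']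
        ring
      · rw [indicator_of_mem (show s ∈ Ioo r 1 from ⟨h', hs1.2⟩),
          indicator_of_notMem (show s ∉ Ioo 0 r from fun h => absurd h.2 (not_lt.2 h'.le)), hβ2 s hs1 h']
        ring
    · rw [indicator_of_notMem (show s ∉ Ioo 0 r from fun h => hs1 ⟨h.1, h.2.trans_le hr.2⟩),
        indicator_of_notMem (show s ∉ Ioo r 1 from fun h => hs1 ⟨hr.1.trans_lt h.1, h.2⟩), hb00 s hs1]
      simp
  have hsum : ∫⁻ u, ∑ j, T j u = ENNReal.ofReal (x + (m+1) * (x+y)) := by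
    rw [lintegral_finsetSum _ (fun j _ => hTm j), Fin.sum_univ_succAbove _ i, hT1, 
      Finset.sum_congr rfl (fun k _ => hT2 _ (Fin.succAbove_ne i k))]
    rw [Finset.sum_const, Finset.card_univ, Fintype.card_fin, ← ENNReal.ofReal_add hx hy, nsmul_eq_mul,
      ENNReal.ofReal_add hx (show 0 ≤ ((m:ℝ)+1) * (x+y) by positivity),
      ENNReal.ofReal_mul (show 0 ≤ (m:ℝ)+1 by positivity), ← Nat.cast_succ, ENNReal.ofReal_natCast]
  have hcube : MeasurableSet (Set.univ.pi (fun _ : Fin (m+1+1) => Set.Icc (0:ℝ) 1)) :=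
    MeasurableSet.univ_pi fun _ => measurableSet_Icc
  have hset : ∫⁻ u in Set.univ.pi (fun _ : Fin (m+1+1) => Set.Icc (0:ℝ) 1), ∑ j, T j u = 
      ENNReal.ofReal (x + (m+1) * (x+y)) := by
    rw [← hsum]
    refine setLIntegral_eq_of_support_subset ?_
    intro u hu
    obtain ⟨j, -, hj⟩ := Finset.exists_ne_zero_of_sum_ne_zero (Function.mem_support.1 hu)
    have hj1 := left_ne_zero_of_mul hj
    have hj2 := Finset.prod_ne_zero_iff.1 (right_ne_zero_of_mul hj)
    intro k _
    by_cases hk : k = j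
    · rw [hk]
      have q1 : b0 (u j) ≠ 0 := fun h => hj1 (by simp [indicator, h])
      exact Ioo_subset_Icc_self (mem_of_indicator_ne_zero q1)
    · obtain ⟨k', hk'⟩ := Fin.exists_succAbove_eq hk
      have q1 : a0 (u k) ≠ 0 := fun h => hj2 k' (Finset.mem_univ _) (by rw [hk']; simp [indicator, h])
      exact Ioo_subset_Icc_self (mem_of_indicator_ne_zero q1)
  have hae : ∀ᵐ u ∂volume.restrict (Set.univ.pi (fun _ : Fin (m+1+1) => Set.Icc (0:ℝ) 1)), 
     0 ≤ (b (⨆ i, u i) *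
      ∏ i ∈ Finset.univ.filter (fun i => u i ≠ ⨆ j, u j), a (u i)) * (if u i ≤ r then (1:ℝ) else 0) ∧
     ∑ j, T j u = ENNReal.ofReal ((b (⨆ i, u i) *
      ∏ i ∈ Finset.univ.filter (fun i => u i ≠ ⨆ j, u j), a (u i)) * (if u i ≤ r then 1 else 0)) := by
    rw [ae_restrict_iff' hcube]
    filter_upwards [ae_inj (m+1+1), ae_coord _ ha0, ae_coord _ hb0, ae_coord _ hne0, ae_coord _ hne1]
      with u u1 u2 u3 u4 u5 hu
    have hu' : ∀ k, u k ∈ Icc (0:ℝ) 1 := fun k => hu k trivial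
    have huo : ∀ k, u k ∈ Ioo (0:ℝ) 1 := fun k => 
      ⟨lt_of_le_of_ne (hu' k).1 (u4 k).symm, lt_of_le_of_ne (hu' k).2 (u5 k)⟩
    refine ⟨?_, D_eq (m+1) u u1 a b a0 b0 (fun k => u2 k (huo k)) (fun k => u3 k (huo k)) 
      (fun k => hapos _ (hu' k)) (fun k => hbpos _ (hu' k)) i r g hg⟩
    obtain ⟨j, hj⟩ := exists_eq_ciSup_of_finite (f := u)
    rw [← hj]
    refine mul_nonneg (mul_nonneg (hbpos _ (hu' j)) (Finset.prod_nonneg fun k _ => hapos _ (hu' k))) ?_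
    split_ifs <;> norm_num
  have hfin := integral_toReal (μ := volume.restrict (Set.univ.pi (fun _ : Fin (m+1+1) => Set.Icc (0:ℝ) 1)))
    (f := fun u => ∑ j, T j u) (Finset.measurable_sum _ fun j _ => hTm j).aemeasurable ?_
  · rw [hset, ENNReal.toReal_ofReal (by positivity)] at hfin
    rw [← hfin]
    refine integral_congr_ae ?_
    filter_upwards [hae] with u hu
    rw [hu.2, ENNReal.toReal_ofReal hu.1]
  · filter_upwards [hae] with u hu
    rw [hu.2]; exact ENNReal.ofReal_lt_top

/-- c_δ(x) = b(max x)·∏_{x_i ≠ max x} a(x_i) is a copula density: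
it is non-negative on the cube and has uniform one-dimensional marginals. -/
theorem c_delta_is_copula_density
    (d : ℕ) (hd : 2 ≤ d) (δ δ' : ℝ → ℝ)
    (hmono : MonotoneOn δ (Set.Icc 0 1))
    (hlip : ∀ s ∈ Set.Icc (0:ℝ) 1, ∀ t ∈ Set.Icc (0:ℝ) 1,
      |δ s - δ t| ≤ (d : ℝ) * |s - t|)
    (h0 : δ 0 = 0) (h1 : δ 1 = 1)
    (hlt : ∀ t ∈ Set.Ioo (0:ℝ) 1, δ t < t)
    (hderiv : ∀ᵐ t ∂(volume.restrict (Set.Icc (0:ℝ) 1)), HasDerivAt δ (δ' t) t)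
    (hd' : ∀ t ∈ Set.Icc (0:ℝ) 1, δ' t ∈ Set.Icc (0:ℝ) (d:ℝ))
    (h F a b : ℝ → ℝ)
    (hh : ∀ r, h r = r - δ r)
    (hF : ∀ r, F r = (((d:ℝ) - 1) / d) * ∫ s in (1/2 : ℝ)..r, 1 / h s)
    (ha : ∀ r, a r = (((d:ℝ) - δ' r) / d) * h r ^ (-1 + 1/(d:ℝ)) * Real.exp (F r))
    (hb : ∀ r, b r = (δ' r / d) * h r ^ (-1 + 1/(d:ℝ)) *
      Real.exp (-((d:ℝ) - 1) * F r))
    (c : (Fin d → ℝ) → ℝ)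
    (hc : ∀ x, c x = b (⨆ i, x i) *
      ∏ i ∈ Finset.univ.filter (fun i => x i ≠ ⨆ j, x j), a (x i)) :
    (∀ x ∈ Set.univ.pi (fun _ : Fin d => Set.Icc (0:ℝ) 1), 0 ≤ c x) ∧
    (∀ i : Fin d, ∀ r ∈ Set.Icc (0:ℝ) 1,
      (∫ u in Set.univ.pi (fun _ : Fin d => Set.Icc (0:ℝ) 1),
        c u * (if u i ≤ r then 1 else 0)) = r) := by
  obtain ⟨m, rfl⟩ : ∃ m, d = m + 1 + 1 := ⟨d - 2, by omega⟩
  have hD : (((m + 1 + 1 : ℕ) : ℝ)) = (m:ℝ) + 2 := by push_cast; ring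
  have hm0 : (0:ℝ) ≤ m := Nat.cast_nonneg m
  have hD0 : (0:ℝ) < ((m + 1 + 1 : ℕ) : ℝ) := by rw [hD]; linarith
  have hh0 : ∀ t ∈ Icc (0:ℝ) 1, 0 ≤ h t := by
    intro t ht
    rw [hh]
    rcases ht.1.eq_or_lt with rfl | h2
    · rw [h0]; simp
    rcases ht.2.eq_or_lt with rfl | h3
    · rw [h1]; simp
    linarith [hlt t ⟨h2, h3⟩]
  have hapos : ∀ t ∈ Icc (0:ℝ) 1, 0 ≤ a t := by
    intro t ht
    rw [ha]
    exact mul_nonneg (mul_nonneg (div_nonneg (by linarith [(hd' t ht).2]) hD0.le)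
      (Real.rpow_nonneg (hh0 t ht) _)) (Real.exp_pos _).le
  have hbpos : ∀ t ∈ Icc (0:ℝ) 1, 0 ≤ b t := by
    intro t ht
    rw [hb]
    exact mul_nonneg (mul_nonneg (div_nonneg (hd' t ht).1 hD0.le)
      (Real.rpow_nonneg (hh0 t ht) _)) (Real.exp_pos _).le
  refine ⟨?_, ?_⟩
  · intro x hx
    rw [hc]
    obtain ⟨j, hj⟩ := exists_eq_ciSup_of_finite (f := x)
    rw [← hj]
    exact mul_nonneg (hbpos _ (hx j trivial)) (Finset.prod_nonneg fun k _ => hapos _ (hx k trivial))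
  · intro i r hr
    obtain ⟨hma, hmb, C2, C3⟩ := onedim m δ δ' _ hD hmono hlip h0 h1 hlt hderiv hd' h F a b hh hF ha hb
      _ (fun s => rfl)
    have hδ0 : 0 ≤ δ r := by
      rw [← h0]; exact hmono (by norm_num) hr hr.1
    simp_rw [hc]
    rw [total m a b hma hmb hapos hbpos _ (fun s => rfl) r _ _ hr (div_nonneg hδ0 hD0.le)
      (div_nonneg (hh0 r hr) (by positivity)) (C2 r hr) (C3 r hr) i, hh, hD]
    field_simp
    ring
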